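/- arXiv:2303.08160 — 2 statements merged into one kernel-verified Lean document; each statement's English description precedes it below -/
import Mathlib

section
/- The set of minimal monomial generators G(I(K_V^t)) of the edge ideal of a complete t-spread d-partite hypergraph is sortable: if u, v ∈ G(I(K_V^t)) and sort(u, v) = (u', v'), then u', v' ∈ G(I(K_V^t)). -/
/-! The edges `e` and `f` satisfy `max (e j) (f j) ≤ min (e (j+1)) (f (j+1))`, because the parts
`V j` and `V (j+1)` are separated. Hence the pair of pointwise minimum and maximum of `e` and `f` is
sorted, and it has the same product as `e` and `f`. A sorted pair is determined by its product
(`SortedPair.unique`: strip off the two smallest indices and induct), so `a = min e f` and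
`b = max e f`. Both of these take the `j`-th value in `V j`, and both inherit the spread
inequalities, as `min` and `max` are monotone and commute with adding a constant. -/

open MvPolynomial

/-- `e : Fin d → Fin n` encodes a `𝐭`-spread edge. -/
def IsSpreadEdge (n d : ℕ) (V : Fin d → Finset (Fin n)) (t : ℕ → ℕ) (e : Fin d → Fin n) :
    Prop :=
  (∀ j, e j ∈ V j) ∧
    ∀ (j : ℕ) (h : j + 1 < d),
      (e ⟨j, Nat.lt_of_succ_lt h⟩ : ℕ) + t j ≤ (e ⟨j + 1, h⟩ : ℕ)

/-- The set of minimal monomial generators `G(I(K_V^𝐭))`. -/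
def spreadGens (K : Type) [Field K] (n d : ℕ) (V : Fin d → Finset (Fin n)) (t : ℕ → ℕ) :
    Set (MvPolynomial (Fin n) K) :=
  {m | ∃ e : Fin d → Fin n, IsSpreadEdge n d V t e ∧ m = ∏ j, X (e j)}

/-- Exponent vector of the monomial `∏ j, x_{a j}`. -/
noncomputable def expOf {n d : ℕ} (a : Fin d → Fin n) : Fin n →₀ ℕ :=
  ∑ j, Finsupp.single (a j) 1

/-- The pair of degree-`d` monomials `(∏ j, x_{a j}, ∏ j, x_{b j})` (with `a`, `b` listing the
variable indices in weakly increasing order) is *sorted*: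
`a 1 ≤ b 1 ≤ a 2 ≤ b 2 ≤ ⋯ ≤ a d ≤ b d`. -/
def SortedPair (n d : ℕ) (a b : Fin d → Fin n) : Prop :=
  (∀ j, a j ≤ b j) ∧
    ∀ (j : ℕ) (h : j + 1 < d), b ⟨j, Nat.lt_of_succ_lt h⟩ ≤ a ⟨j + 1, h⟩

theorem expOf_ne_zero_iff {n d : ℕ} (a : Fin d → Fin n) (x : Fin n) :
    expOf a x ≠ 0 ↔ ∃ j, a j = x := by
  simp [expOf, Finsupp.finsetSum_apply, Finsupp.single_apply]

theorem expOf_succ {n d : ℕ} (a : Fin (d + 1) → Fin n) :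
    expOf a = Finsupp.single (a 0) 1 + expOf (fun j => a j.succ) := by
  simp [expOf, Fin.sum_univ_succ]

theorem exists_of_expOf_add_eq {n k l k' l' : ℕ} {a : Fin k → Fin n} {b : Fin l → Fin n}
    {a' : Fin k' → Fin n} {b' : Fin l' → Fin n}
    (h : expOf a + expOf b = expOf a' + expOf b') {x : Fin n}
    (hx : (∃ j, a j = x) ∨ ∃ j, b j = x) : (∃ j, a' j = x) ∨ ∃ j, b' j = x := by
  have h1 := DFunLike.congr_fun h x
  simp only [← expOf_ne_zero_iff, Finsupp.add_apply] at *
  omega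

theorem SortedPair.tail {n d : ℕ} {a b : Fin (d + 1) → Fin n} (h : SortedPair n (d + 1) a b) :
    SortedPair n d (fun j => a j.succ) (fun j => b j.succ) :=
  ⟨fun j => h.1 j.succ, fun j hj => h.2 (j + 1) (by omega)⟩

theorem SortedPair.head_le {n d : ℕ} {a b : Fin (d + 1) → Fin n}
    (h : SortedPair n (d + 1) a b) (j : Fin (d + 1)) : a 0 ≤ a j ∧ b 0 ≤ b j := by
  obtain ⟨j, hj⟩ := j
  induction j with
  | zero => exact ⟨le_rfl, le_rfl⟩
  | succ k ih =>
    have h1 := ih (by omega)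
    have h2 := h.2 k hj
    have h3 := h.1 ⟨k, by omega⟩
    have h4 := h.1 ⟨k + 1, hj⟩
    exact ⟨h1.1.trans (h3.trans h2), h1.2.trans (h2.trans h4)⟩

theorem SortedPair.snd_head_le {n d : ℕ} {a b : Fin (d + 1) → Fin n}
    (h : SortedPair n (d + 1) a b) (j : Fin d) : b 0 ≤ a j.succ :=
  (h.head_le j.castSucc).2.trans (h.2 j (by omega))

/-- The first entry of a sorted pair is the smallest index occurring in it, so it can be compared
with the first entry of any pair having the same product. -/
theorem SortedPair.fst_head_le {n d : ℕ} {a b a' b' : Fin (d + 1) → Fin n}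
    (h : SortedPair n (d + 1) a b) (heq : expOf a + expOf b = expOf a' + expOf b') :
    a 0 ≤ a' 0 := by
  obtain ⟨j, hj⟩ | ⟨j, hj⟩ := exists_of_expOf_add_eq heq.symm (Or.inl ⟨0, rfl⟩)
  · exact hj ▸ (h.head_le j).1
  · exact hj ▸ ((h.head_le j).1.trans (h.1 j))

/-- Once the smallest index has been removed, the next smallest one is the first entry of the
second component. -/
theorem SortedPair.snd_head_le_of_eq {n d : ℕ} {a b a' b' : Fin (d + 1) → Fin n}
    (h : SortedPair n (d + 1) a b)
    (heq : expOf (fun j : Fin d => a j.succ) + expOf b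
      = expOf (fun j : Fin d => a' j.succ) + expOf b') : b 0 ≤ b' 0 := by
  obtain ⟨j, hj⟩ | ⟨j, hj⟩ := exists_of_expOf_add_eq heq.symm (Or.inr ⟨0, rfl⟩)
  · exact hj ▸ h.snd_head_le j
  · exact hj ▸ (h.head_le j).2

/-- A sorted pair of monomials is determined by the product of its components. -/
theorem SortedPair.unique {n : ℕ} : ∀ {d : ℕ} {a b a' b' : Fin d → Fin n},
    SortedPair n d a b → SortedPair n d a' b' →
    expOf a + expOf b = expOf a' + expOf b' → a = a' ∧ b = b'
  | 0, _, _, _, _, _, _, _ => ⟨Subsingleton.elim _ _, Subsingleton.elim _ _⟩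
  | d + 1, a, b, a', b', h, h', heq => by
    have ha : a 0 = a' 0 := le_antisymm (h.fst_head_le heq) (h'.fst_head_le heq.symm)
    have heq1 : expOf (fun j : Fin d => a j.succ) + expOf b
        = expOf (fun j : Fin d => a' j.succ) + expOf b' := by
      rw [expOf_succ a, expOf_succ a', ha, add_assoc, add_assoc] at heq
      exact add_left_cancel heq
    have hb : b 0 = b' 0 :=
      le_antisymm (h.snd_head_le_of_eq heq1) (h'.snd_head_le_of_eq heq1.symm)
    have heq2 : expOf (fun j : Fin d => a j.succ) + expOf (fun j : Fin d => b j.succ)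
        = expOf (fun j : Fin d => a' j.succ) + expOf (fun j : Fin d => b' j.succ) := by
      rw [expOf_succ b, expOf_succ b', hb, add_left_comm, add_left_comm (expOf _)] at heq1
      exact add_left_cancel heq1
    obtain ⟨h1, h2⟩ := SortedPair.unique h.tail h'.tail heq2
    constructor <;> funext j <;> refine Fin.cases ?_ (fun i => ?_) j
    exacts [ha, congrFun h1 i, hb, congrFun h2 i]

theorem expOf_min_add_expOf_max {n d : ℕ} (e f : Fin d → Fin n) :
    expOf (fun j => min (e j) (f j)) + expOf (fun j => max (e j) (f j))
      = expOf e + expOf f := by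
  simp only [expOf, ← Finset.sum_add_distrib]
  refine Finset.sum_congr rfl fun j _ => ?_
  rcases le_total (e j) (f j) with h | h <;> simp [h, add_comm]

theorem IsSpreadEdge.min {n d : ℕ} {V : Fin d → Finset (Fin n)} {t : ℕ → ℕ} {e f : Fin d → Fin n}
    (he : IsSpreadEdge n d V t e) (hf : IsSpreadEdge n d V t f) :
    IsSpreadEdge n d V t fun j => min (e j) (f j) := by
  refine ⟨fun j => ?_, fun j hj => ?_⟩
  · rcases min_choice (e j) (f j) with h | h <;> simp only [h]
    exacts [he.1 j, hf.1 j]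
  · have h1 := he.2 j hj
    have h2 := hf.2 j hj
    simp only [Fin.coe_min]
    omega

theorem IsSpreadEdge.max {n d : ℕ} {V : Fin d → Finset (Fin n)} {t : ℕ → ℕ} {e f : Fin d → Fin n}
    (he : IsSpreadEdge n d V t e) (hf : IsSpreadEdge n d V t f) :
    IsSpreadEdge n d V t fun j => max (e j) (f j) := by
  refine ⟨fun j => ?_, fun j hj => ?_⟩
  · rcases max_choice (e j) (f j) with h | h <;> simp only [h]
    exacts [he.1 j, hf.1 j]
  · have h1 := he.2 j hj
    have h2 := hf.2 j hj
    simp only [Fin.coe_max]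
    omega

/-- **Proposition (sortability).**  `G(I(K_V^𝐭))` is a sortable set: if `u, v ∈ G(I(K_V^𝐭))`
and `sort(u, v) = (u', v')` — i.e. `(u', v')` is the (unique) sorted pair with
`u'v' = uv` — then `u', v' ∈ G(I(K_V^𝐭))`. -/
theorem spreadGens_sortable
    (K : Type) [Field K] (n d : ℕ) (hd : 0 < d)
    (V : Fin d → Finset (Fin n)) (t : ℕ → ℕ)
    (ht : ∀ i, 1 ≤ t i)
    (hV : ∀ i j : Fin d, i < j → ∀ p ∈ V i, ∀ q ∈ V j, (p : ℕ) < (q : ℕ))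
    (hne : ∀ j, (V j).Nonempty)
    (hiso : ∀ (j : Fin d), ∀ v ∈ V j, ∃ e, IsSpreadEdge n d V t e ∧ e j = v)
    (e f a b : Fin d → Fin n)
    (he : IsSpreadEdge n d V t e) (hf : IsSpreadEdge n d V t f)
    (hsorted : SortedPair n d a b)
    (hprod : expOf a + expOf b = expOf e + expOf f) :
    (∏ j, X (a j) : MvPolynomial (Fin n) K) ∈ spreadGens K n d V t ∧
      (∏ j, X (b j) : MvPolynomial (Fin n) K) ∈ spreadGens K n d V t := by
  have hs : SortedPair n d (fun j => min (e j) (f j)) (fun j => max (e j) (f j)) := by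
    refine ⟨fun j => min_le_max, fun j hj => ?_⟩
    -- Every value in part `j` lies below every value in part `j + 1`.
    have key : ∀ p ∈ V ⟨j, Nat.lt_of_succ_lt hj⟩, ∀ q ∈ V ⟨j + 1, hj⟩, p ≤ q :=
      fun p hp q hq => (hV _ _ (Fin.mk_lt_mk.2 j.lt_succ_self) p hp q hq).le
    exact key _ ((he.max hf).1 _) _ ((he.min hf).1 _)
  obtain ⟨rfl, rfl⟩ := hsorted.unique hs (hprod.trans (expOf_min_add_expOf_max e f).symm)
  exact ⟨⟨_, he.min hf, rfl⟩, ⟨_, he.max hf, rfl⟩⟩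
end

section
/- The edge ideal I(K_V^t) of a complete t-spread d-partite hypergraph satisfies the ℓ-exchange property with respect to the sorting order <_sort: if t_{u_1}⋯t_{u_N} and t_{v_1}⋯t_{v_N} are standard monomials of ker φ with respect to <_sort such that deg_{x_i}(u_1⋯u_N) = deg_{x_i}(v_1⋯v_N) for i = 1, ..., q−1 (q ≤ n−1) and deg_{x_q}(u_1⋯u_N) < deg_{x_q}(v_1⋯v_N), then there exist j and α with q < j ≤ n such that x_q u_α / x_j ∈ I(K_V^t). -/
/-!
Since the blocks `V j` are disjoint and increasing, the degree of `x_i` in `u_1 ⋯ u_N`, for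
`i ∈ V j`, counts how often `i` occurs in the `j`-th column `α ↦ u α j`. The sorting condition makes
each column monotone, and a monotone column is determined below `q` by the multiplicities of the
values below `q`. Hence the columns of `u` and `v` agree wherever one of them is below `q`
(`eq_of_lt_of_count_eq`).

The variable `x_q` occurs in `v_1 ⋯ v_N`, so `q ∈ V j₀` for a unique `j₀`. In column `j₀`, `v` has
strictly more entries `≤ q` than `u`, so some row `α` has `v α j₀ = q < u α j₀`
(`exists_eq_lt_of_count_lt`). Replacing the entry `u α j₀` of `u α` by `q` keeps it `t`-spread: the
gap to the right grows, and on the left the entry `u α (j₀ - 1) < q` coincides with `v α (j₀ - 1)`,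
whose gap to `q = v α j₀` is large enough because `v α` is `t`-spread.
-/


open MvPolynomial

noncomputable section

/-- The edge ideal `I(K_V^𝐭)`. -/
def edgeIdeal (K : Type) [Field K] (n d : ℕ) (V : Fin d → Finset (Fin n)) (t : ℕ → ℕ) :
    Ideal (MvPolynomial (Fin n) K) :=
  Ideal.span (spreadGens K n d V t)

/-- The `N`-tuple of degree-`d` monomials `(u_1, …, u_N)`, `u_α = ∏ j, x_{u α j}`, is
*sorted* (condition (3.1)):
`u_1(1) ≤ u_2(1) ≤ ⋯ ≤ u_N(1) ≤ u_1(2) ≤ ⋯ ≤ u_N(2) ≤ ⋯ ≤ u_1(d) ≤ ⋯ ≤ u_N(d)`.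
Such tuples correspond exactly to the standard monomials `t_{u_1} ⋯ t_{u_N}` of `ker φ`
with respect to the sorting order `<_sort`. -/
def SortedTuple (n d N : ℕ) (u : Fin N → Fin d → Fin n) : Prop :=
  (∀ (j : Fin d) (α β : Fin N), α ≤ β → u α j ≤ u β j) ∧
    ∀ (j : ℕ) (h : j + 1 < d) (α β : Fin N),
      u α ⟨j, Nat.lt_of_succ_lt h⟩ ≤ u β ⟨j + 1, h⟩

/-- `deg_{x_i} (u_1 u_2 ⋯ u_N)` for the tuple of monomials encoded by `u`. -/
def tupleDeg (n d N : ℕ) (u : Fin N → Fin d → Fin n) (i : Fin n) : ℕ :=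
  ∑ α : Fin N, ∑ j : Fin d, if u α j = i then 1 else 0

theorem card_lt_eq_sum {n N : ℕ} (f : Fin N → Fin n) (x : Fin n) :
    (Finset.univ.filter fun α => f α < x).card =
      ∑ i ∈ Finset.Iio x, (Finset.univ.filter fun α => f α = i).card := by
  rw [Finset.card_eq_sum_card_fiberwise (f := f) (t := Finset.Iio x)
    (fun α hα => by simpa using hα)]
  refine Finset.sum_congr rfl fun i hi => ?_
  rw [Finset.filter_filter]
  congr 1
  ext α
  simp only [Finset.mem_filter, Finset.mem_univ, true_and, Finset.mem_Iio] at hi ⊢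
  exact ⟨fun h => h.2, fun h => ⟨h ▸ hi, h⟩⟩

/-- The sets `{f < x}` and `{g < x}` are initial segments of `Fin N`, hence nested, so equal
cardinalities force them to coincide. -/
theorem lt_of_card_eq {n N : ℕ} {f g : Fin N → Fin n} (hf : Monotone f) (hg : Monotone g)
    {x : Fin n}
    (h : (Finset.univ.filter fun α => f α < x).card = (Finset.univ.filter fun α => g α < x).card)
    {α : Fin N} (hα : f α < x) : g α < x := by
  by_contra hgx
  have hss : (Finset.univ.filter fun β => g β < x) ⊂ Finset.univ.filter fun β => f β < x := by
    rw [Finset.ssubset_iff_of_subset]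
    · exact ⟨α, by simpa using hα, by simpa using hgx⟩
    · intro β hβ
      simp only [Finset.mem_filter, Finset.mem_univ, true_and] at hβ ⊢
      have hβα : β ≤ α := by
        by_contra hc
        exact hgx ((hg (not_le.mp hc).le).trans_lt hβ)
      exact (hf hβα).trans_lt hα
  exact absurd (Finset.card_lt_card hss) (by omega)

/-- Monotone sequences in which every value below `q` has the same multiplicity agree at each place
where the first is below `q`. -/
theorem eq_of_lt_of_count_eq {n N : ℕ} {f g : Fin N → Fin n} (hf : Monotone f) (hg : Monotone g)
    {q : Fin n}
    (h : ∀ i < q, (Finset.univ.filter fun α => f α = i).card =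
      (Finset.univ.filter fun α => g α = i).card)
    {α : Fin N} (hα : f α < q) : f α = g α := by
  have hc : ∀ x ≤ q, (Finset.univ.filter fun α => f α < x).card =
      (Finset.univ.filter fun α => g α < x).card := by
    intro x hx
    rw [card_lt_eq_sum, card_lt_eq_sum]
    exact Finset.sum_congr rfl fun i hi => h i ((Finset.mem_Iio.mp hi).trans_le hx)
  have hgα : g α < q := lt_of_card_eq hf hg (hc q le_rfl) hα
  rcases lt_trichotomy (f α) (g α) with hlt | heq | hlt
  · exact absurd (lt_of_card_eq hf hg (hc _ hgα.le) hlt) (lt_irrefl _)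
  · exact heq
  · exact absurd (lt_of_card_eq hg hf (hc _ hα.le).symm hlt) (lt_irrefl _)

theorem exists_eq_lt_of_count_lt {n N : ℕ} {f g : Fin N → Fin n} (hf : Monotone f)
    (hg : Monotone g) {q : Fin n}
    (h : ∀ i < q, (Finset.univ.filter fun α => f α = i).card =
      (Finset.univ.filter fun α => g α = i).card)
    (hq : (Finset.univ.filter fun α => f α = q).card <
      (Finset.univ.filter fun α => g α = q).card) :
    ∃ α, g α = q ∧ q < f α := by
  by_contra! hcon
  have hlt : ∀ α, g α < q → f α = g α := fun α hα =>
    (eq_of_lt_of_count_eq hg hf (fun i hi => (h i hi).symm) hα).symm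
  -- Under `hcon`, `g α = q` forces `f α = q`, as `f α < q` would give `f α = g α`.
  refine absurd (Finset.card_le_card (s := Finset.univ.filter fun α => g α = q)
    (t := Finset.univ.filter fun α => f α = q) fun α hα => ?_) (not_le.mpr hq)
  simp only [Finset.mem_filter, Finset.mem_univ, true_and] at hα ⊢
  refine (hcon α hα).antisymm (not_lt.mp fun hc => ?_)
  have := eq_of_lt_of_count_eq hf hg h hc
  rw [this, hα] at hc
  exact lt_irrefl _ hc

/-- By disjointness of the blocks, a vertex `i ∈ V j` can only occur in column `j`. -/
theorem tupleDeg_eq_card {n d N : ℕ} {V : Fin d → Finset (Fin n)}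
    (hV : ∀ i j : Fin d, i < j → ∀ p ∈ V i, ∀ q ∈ V j, (p : ℕ) < (q : ℕ))
    {u : Fin N → Fin d → Fin n} (hu : ∀ α j, u α j ∈ V j) {j : Fin d} {i : Fin n}
    (hi : i ∈ V j) :
    tupleDeg n d N u i = (Finset.univ.filter fun α => u α j = i).card := by
  rw [tupleDeg, Finset.card_filter]
  refine Finset.sum_congr rfl fun α _ => ?_
  refine Finset.sum_eq_single j (fun k _ hk => if_neg fun h => ?_) (by simp)
  have hik : i ∈ V k := h ▸ hu α k
  rcases lt_or_gt_of_ne hk with hlt | hlt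
  · exact lt_irrefl _ (hV k j hlt i hik i hi)
  · exact lt_irrefl _ (hV j k hlt i hi i hik)

/-- **Theorem (ℓ-exchange property).**  `I(K_V^𝐭)` satisfies the ℓ-exchange property with
respect to the sorting order `<_sort`: if `t_{u_1}⋯t_{u_N}` and `t_{v_1}⋯t_{v_N}` are
standard monomials of `ker φ` with respect to `<_sort` (equivalently, the tuples are sorted)
such that `deg_{x_i}(u_1⋯u_N) = deg_{x_i}(v_1⋯v_N)` for all `i < q` (`q ≤ n - 1`) and
`deg_{x_q}(u_1⋯u_N) < deg_{x_q}(v_1⋯v_N)`, then there are `α` and `j > q` with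
`x_q · u_α / x_j ∈ I(K_V^𝐭)`. -/
theorem edgeIdeal_l_exchange
    (K : Type) [Field K] (n d : ℕ) (hd : 0 < d)
    (V : Fin d → Finset (Fin n)) (t : ℕ → ℕ)
    (ht : ∀ i, 1 ≤ t i)
    (hV : ∀ i j : Fin d, i < j → ∀ p ∈ V i, ∀ q ∈ V j, (p : ℕ) < (q : ℕ))
    (hne : ∀ j, (V j).Nonempty)
    (hiso : ∀ (j : Fin d), ∀ v ∈ V j, ∃ e, IsSpreadEdge n d V t e ∧ e j = v)
    (N : ℕ) (u v : Fin N → Fin d → Fin n)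
    (hu : ∀ α, IsSpreadEdge n d V t (u α)) (hv : ∀ α, IsSpreadEdge n d V t (v α))
    (husort : SortedTuple n d N u) (hvsort : SortedTuple n d N v)
    (q : Fin n) (hq : (q : ℕ) + 1 < n)
    (hdeg : ∀ i : Fin n, i < q → tupleDeg n d N u i = tupleDeg n d N v i)
    (hdegq : tupleDeg n d N u q < tupleDeg n d N v q) :
    ∃ (α : Fin N) (j : Fin n), q < j ∧
      ∃ m ∈ edgeIdeal K n d V t,
        X j * m = X q * ∏ i, (X (u α i) : MvPolynomial (Fin n) K) := by
  have huV : ∀ α j, u α j ∈ V j := fun α => (hu α).1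
  have hvV : ∀ α j, v α j ∈ V j := fun α => (hv α).1
  have hcol : ∀ (j : Fin d), ∀ i < q, (Finset.univ.filter fun α => u α j = i).card =
      (Finset.univ.filter fun α => v α j = i).card := by
    intro j i hi
    by_cases hij : i ∈ V j
    · rw [← tupleDeg_eq_card hV huV hij, ← tupleDeg_eq_card hV hvV hij, hdeg i hi]
    · rw [Finset.filter_false_of_mem fun α _ (h : u α j = i) => hij (h ▸ huV α j),
        Finset.filter_false_of_mem fun α _ (h : v α j = i) => hij (h ▸ hvV α j)]
  obtain ⟨j₀, hj₀⟩ : ∃ j, q ∈ V j := by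
    by_contra! hno
    have : tupleDeg n d N v q = 0 :=
      Finset.sum_eq_zero fun α _ => Finset.sum_eq_zero fun j _ =>
        if_neg fun (h : v α j = q) => hno j (h ▸ hvV α j)
    omega
  have humono : ∀ j, Monotone fun α => u α j := fun j α β h => husort.1 j α β h
  have hvmono : ∀ j, Monotone fun α => v α j := fun j α β h => hvsort.1 j α β h
  obtain ⟨α, hvα, huα⟩ : ∃ α, v α j₀ = q ∧ q < u α j₀ := by
    rw [tupleDeg_eq_card hV huV hj₀, tupleDeg_eq_card hV hvV hj₀] at hdegq
    exact exists_eq_lt_of_count_lt (humono j₀) (hvmono j₀) (hcol j₀) hdegq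
  have hspread : IsSpreadEdge n d V t (Function.update (u α) j₀ q) := by
    refine ⟨fun j => ?_, fun j h => ?_⟩
    · by_cases hj : j = j₀
      · subst hj; simpa using hj₀
      · simpa [hj] using huV α j
    · have hgap := (hu α).2 j h
      by_cases h1 : (⟨j + 1, h⟩ : Fin d) = j₀
      · have hlt : (⟨j, Nat.lt_of_succ_lt h⟩ : Fin d) < j₀ := by
          rw [← h1]; exact Nat.lt_succ_self j
        have heq : u α ⟨j, Nat.lt_of_succ_lt h⟩ = v α ⟨j, Nat.lt_of_succ_lt h⟩ :=
          eq_of_lt_of_count_eq (humono _) (hvmono _) (hcol _)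
            (hV _ j₀ hlt _ (huV α _) q hj₀)
        have hvgap := (hv α).2 j h
        rw [h1, hvα] at hvgap
        rw [h1, Function.update_self, Function.update_of_ne hlt.ne, heq]
        exact hvgap
      · rw [Function.update_of_ne h1]
        by_cases h0 : (⟨j, Nat.lt_of_succ_lt h⟩ : Fin d) = j₀
        · rw [h0] at hgap ⊢
          rw [Function.update_self]
          have : (q : ℕ) < u α j₀ := huα
          omega
        · rw [Function.update_of_ne h0]
          exact hgap
  refine ⟨α, u α j₀, huα, ∏ i, X (Function.update (u α) j₀ q i),
    Ideal.subset_span ⟨_, hspread, rfl⟩, ?_⟩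
  have hrest : ∏ i ∈ Finset.univ.erase j₀, (X (Function.update (u α) j₀ q i) : MvPolynomial _ K) =
      ∏ i ∈ Finset.univ.erase j₀, X (u α i) :=
    Finset.prod_congr rfl fun i hi => by
      rw [Function.update_of_ne (Finset.ne_of_mem_erase hi)]
  rw [← Finset.mul_prod_erase _ _ (Finset.mem_univ j₀), hrest, Function.update_self,
    ← Finset.mul_prod_erase _ (fun i => (X (u α i) : MvPolynomial _ K)) (Finset.mem_univ j₀)]
  ring

end
end
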